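/- Let v : ℝⁿ → ℝ be the support function of P, i.e. v(x) := max_{1 ≤ k ≤ m} ⟨x, p⁽ᵏ⁾⟩ where p⁽¹⁾,…,p⁽ᵐ⁾ are the vertices of P (equivalently v(x) = sup_{y ∈ P} ⟨x, y⟩). Then there exists a constant C > 0 such that |φ⁰(x) − v(x)| ≤ C for all x ∈ ℝⁿ. -/

import Mathlib

noncomputable section

/-- Dot product on `Fin n → ℝ`. -/
def dotp {n : ℕ} (x y : Fin n → ℝ) : ℝ := ∑ j, x j * y j

/-- The affine functions `lᵢ(y) = ⟨y, n⁽ⁱ⁾⟩ + 1`. -/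
def lfun {n d : ℕ} (N : Fin d → Fin n → ℤ) (i : Fin d) (y : Fin n → ℝ) : ℝ :=
  (∑ j, y j * (N i j : ℝ)) + 1

/-- The dual polytope `P = {y : ⟨y, n⁽ⁱ⁾⟩ ≥ -1 for all i}`. -/
def Pset {n d : ℕ} (N : Fin d → Fin n → ℤ) : Set (Fin n → ℝ) :=
  {y | ∀ i, (∑ j, y j * (N i j : ℝ)) ≥ -1}

/-- The function `u⁰(y) = ∑ᵢ lᵢ(y) log lᵢ(y)`. -/
def u0 {n d : ℕ} (N : Fin d → Fin n → ℤ) (y : Fin n → ℝ) : ℝ :=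
  ∑ i, lfun N i y * Real.log (lfun N i y)

/-- Second partial derivatives (Hessian matrix) of a function on `Fin n → ℝ`. -/
def hess {n : ℕ} (f : (Fin n → ℝ) → ℝ) (x : Fin n → ℝ) : Matrix (Fin n) (Fin n) ℝ :=
  Matrix.of fun p q => fderiv ℝ (fun z => fderiv ℝ f z (Pi.single q 1)) x (Pi.single p 1)

/-- The Legendre transform `φ⁰(x) = sup_{y ∈ P°} (⟨x,y⟩ - u⁰(y))`. -/
def phi0 {n d : ℕ} (N : Fin d → Fin n → ℤ) (x : Fin n → ℝ) : ℝ :=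
  sSup ((fun y => dotp x y - u0 N y) '' interior (Pset N))

theorem Pset_bdd {n d : ℕ} (N : Fin d → Fin n → ℤ)
    (hQ : (0 : Fin n → ℝ) ∈ interior (convexHull ℝ (Set.range fun i => fun j => (N i j : ℝ)))) :
    ∃ R : ℝ, ∀ y ∈ Pset N, ‖y‖ ≤ R := by
  rw [mem_interior_iff_mem_nhds, Metric.mem_nhds_iff] at hQ
  obtain ⟨r, hr, hball⟩ := hQ
  refine ⟨2 / r, fun y hy => ?_⟩
  have key : ∀ w : Fin n → ℝ, ‖w‖ < r → -1 ≤ ∑ j, y j * w j := by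
    intro w hw
    have h1 : w ∈ convexHull ℝ (Set.range fun i => fun j => (N i j : ℝ)) :=
      hball (by simpa using hw)
    have h2 : Convex ℝ {w : Fin n → ℝ | -1 ≤ ∑ j, y j * w j} := by
      apply convex_halfSpace_ge
      constructor
      · intro a b
        simp [mul_add, Finset.sum_add_distrib]
      · intro c a
        simp only [Pi.smul_apply, smul_eq_mul, Finset.mul_sum]
        exact Finset.sum_congr rfl fun j _ => by ring
    refine convexHull_min ?_ h2 h1
    rintro _ ⟨i, rfl⟩
    exact hy i
  rw [pi_norm_le_iff_of_nonneg (by positivity)]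
  intro j
  have hn1 : ∀ c : ℝ, |c| < r → -1 ≤ y j * c := by
    intro c hc
    have := key (Pi.single j c) (by
      rw [pi_norm_lt_iff hr]
      intro k
      by_cases h : k = j
      · subst h; simpa using hc
      · simpa [h] using hr)
    simpa [Pi.single_apply] using this
  have a := hn1 (r / 2) (by rw [abs_of_pos] <;> linarith)
  have b := hn1 (-(r / 2)) (by rw [abs_neg, abs_of_pos] <;> linarith)
  rw [Real.norm_eq_abs, le_div_iff₀ hr]
  rcases abs_cases (y j) with h | h <;> rw [h.1] <;> linarith

theorem lfun_cont {n d : ℕ} (N : Fin d → Fin n → ℤ) (i : Fin d) : Continuous (lfun N i) := by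
  unfold lfun; fun_prop

theorem u0_cont {n d : ℕ} (N : Fin d → Fin n → ℤ) : Continuous (u0 N) := by
  unfold u0
  exact continuous_finsetSum _ fun i _ => Real.continuous_mul_log.comp (lfun_cont N i)

theorem dotp_cont {n : ℕ} (x : Fin n → ℝ) : Continuous (dotp x) := by
  unfold dotp; fun_prop

theorem Pset_closed {n d : ℕ} (N : Fin d → Fin n → ℤ) : IsClosed (Pset N) := by
  have : Pset N = ⋂ i, {y | -1 ≤ ∑ j, y j * (N i j : ℝ)} := by
    ext y; simp [Pset]
  rw [this]
  exact isClosed_iInter fun i => isClosed_le continuous_const (by fun_prop)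

theorem Pset_convex {n d : ℕ} (N : Fin d → Fin n → ℤ) : Convex ℝ (Pset N) := by
  have : Pset N = ⋂ i, {y | -1 ≤ ∑ j, y j * (N i j : ℝ)} := by
    ext y; simp [Pset]
  rw [this]
  refine convex_iInter fun i => convex_halfSpace_ge ⟨?_, ?_⟩ _
  · intro a b
    simp [add_mul, Finset.sum_add_distrib]
  · intro c a
    simp only [Pi.smul_apply, smul_eq_mul, Finset.mul_sum]
    exact Finset.sum_congr rfl fun j _ => by ring

theorem Pset_zero {n d : ℕ} (N : Fin d → Fin n → ℤ) : 0 ∈ interior (Pset N) := by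
  have ho : IsOpen (⋂ i, {y | 0 < lfun N i y}) :=
    isOpen_iInter_of_finite fun i => isOpen_lt continuous_const (lfun_cont N i)
  refine interior_maximal ?_ ho ?_
  · intro y hy i
    have := Set.mem_iInter.1 hy i
    simp only [Set.mem_setOf_eq, lfun] at this
    linarith
  · simp [lfun]

/-- `|φ⁰ - v| ≤ C` on `ℝⁿ`, where `v(x) = sup_{y ∈ P} ⟨x,y⟩` is the support function
of `P` (Lemma 2.5). -/
theorem phi0_close_to_support_function {n d : ℕ} (hn : 1 ≤ n) (N : Fin d → Fin n → ℤ)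
    (hQ : (0 : Fin n → ℝ) ∈ interior (convexHull ℝ (Set.range fun i => fun j => (N i j : ℝ)))) :
    ∃ C > 0, ∀ x : Fin n → ℝ,
      |phi0 N x - sSup ((fun y => dotp x y) '' Pset N)| ≤ C := by
  obtain ⟨R, hR⟩ := Pset_bdd N hQ
  have hc : IsCompact (Pset N) := Metric.isCompact_of_isClosed_isBounded (Pset_closed N)
    (isBounded_iff_forall_norm_le.2 ⟨R, hR⟩)
  obtain ⟨M, hM⟩ := hc.exists_bound_of_continuousOn (u0_cont N).continuousOn
  have h0 := Pset_zero N
  have h0' := interior_subset h0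
  have hM0 : 0 ≤ M := (norm_nonneg _).trans (hM 0 h0')
  refine ⟨M + 1, by linarith, fun x => ?_⟩
  have b1 : BddAbove ((fun y => dotp x y) '' Pset N) :=
    (hc.image (dotp_cont x)).bddAbove
  have b2 : BddAbove ((fun y => dotp x y - u0 N y) '' interior (Pset N)) :=
    (hc.image ((dotp_cont x).sub (u0_cont N))).bddAbove.mono (Set.image_mono interior_subset)
  have e1 : phi0 N x ≤ sSup ((fun y => dotp x y) '' Pset N) + M := by
    refine csSup_le ⟨_, 0, h0, rfl⟩ ?_
    rintro _ ⟨y, hy, rfl⟩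
    have h1 := le_csSup b1 ⟨y, interior_subset hy, rfl⟩
    have h2 := abs_le.1 (hM y (interior_subset hy))
    simp only at h1 ⊢
    linarith
  have e2 : sSup ((fun y => dotp x y) '' Pset N) ≤ phi0 N x + M := by
    refine csSup_le ⟨_, 0, h0', rfl⟩ ?_
    rintro _ ⟨y, hy, rfl⟩
    have hcl : IsClosed {y | dotp x y ≤ phi0 N x + M} :=
      isClosed_le (dotp_cont x) continuous_const
    have hsub : interior (Pset N) ⊆ {y | dotp x y ≤ phi0 N x + M} := by
      intro z hz
      have h1 : dotp x z - u0 N z ≤ phi0 N x := le_csSup b2 ⟨z, hz, rfl⟩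
      have h2 := abs_le.1 (hM z (interior_subset hz))
      simp only [Set.mem_setOf_eq]
      linarith
    have hy' : y ∈ closure (interior (Pset N)) := by
      rw [(Pset_convex N).closure_interior_eq_closure_of_nonempty_interior ⟨0, h0⟩]
      exact subset_closure hy
    exact closure_minimal hsub hcl hy'
  rw [abs_le]
  constructor <;> linarith
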